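/- If a Büchi automaton A over a finite alphabet Σ accepts an ultimately periodic sequence x·y^ω, then A has a match (u, v) such that the sequence u·v^ω is pointwise equal to x·y^ω. -/

import Mathlib

/-!
An accepting run visits accepting states at infinitely many positions, and there are only finitely
many pairs (state, position modulo the period of the sequence). So two positions `i < j` in the
periodic part carry the same accepting state and are congruent modulo the period: cutting the
sequence at `i` and `j` gives `u` and `v`. The run loops on `v`, and since `|v|` is a multiple of
the period, `u·v^ω` is the original sequence.
-/

namespace Buechi

/-- Nonempty finite strings over `α`, given as a head together with a tail. -/
abbrev NStr (α : Type*) : Type _ := α × List α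

/-- The list of symbols of a nonempty string. -/
def NStr.toList {α : Type*} (s : NStr α) : List α := s.1 :: s.2

/-- Büchi automata over alphabet `α`: a finite type of states, a transition
relation, initial states and accepting states. -/
structure BA (α : Type*) where
  Q : Type
  fin : Fintype Q
  trans : Q → α → Q → Prop
  init : Q → Prop
  accept : Q → Prop

/-- Büchi acceptance: there is a run starting in an initial state, respecting the
transition relation, and visiting accepting states infinitely often. -/
def BA.Accepts {α : Type*} (M : BA α) (σ : ℕ → α) : Prop :=
  ∃ ρ : ℕ → M.Q, M.init (ρ 0) ∧ (∀ n, M.trans (ρ n) (σ n) (ρ (n + 1))) ∧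
    ∀ k, ∃ n, k ≤ n ∧ M.accept (ρ n)

/-- `M.StepsL p x q`: there is a path on the list `x` from `p` to `q` whose
consecutive transitions are labelled by the successive symbols of `x`. -/
def BA.StepsL {α : Type*} (M : BA α) : M.Q → List α → M.Q → Prop
  | p, [], q => p = q
  | p, a :: x, q => ∃ r, M.trans p a r ∧ M.StepsL r x q

/-- `M.StepsAccL p x q`: there is a path on `x` from `p` to `q` passing through an
accepting state before its last position. -/
def BA.StepsAccL {α : Type*} (M : BA α) : M.Q → List α → M.Q → Prop
  | _, [], _ => False
  | p, a :: x, q => ∃ r, M.trans p a r ∧ ((M.accept p ∧ M.StepsL r x q) ∨ M.StepsAccL r x q)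

/-- `p ⇒x q` for a nonempty string `x`. -/
def BA.Steps {α : Type*} (M : BA α) (p : M.Q) (x : NStr α) (q : M.Q) : Prop :=
  M.StepsL p x.toList q

/-- `p ⇒x! q` for a nonempty string `x`. -/
def BA.StepsAcc {α : Type*} (M : BA α) (p : M.Q) (x : NStr α) (q : M.Q) : Prop :=
  M.StepsAccL p x.toList q

/-- `(x, y)` is a match of `M`: there are states `p`, `q` with `p` initial,
`p ⇒x q` and `q ⇒y! q`. -/
def BA.IsMatch {α : Type*} (M : BA α) (x y : NStr α) : Prop :=
  ∃ p q, M.init p ∧ M.Steps p x q ∧ M.StepsAcc q y q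

/-- The ultimately periodic sequence `x·y^ω = x y y y ⋯`. -/
def upSeq {α : Type*} (x y : NStr α) (n : ℕ) : α :=
  if h : n < x.toList.length then x.toList.get ⟨n, h⟩
  else y.toList.get ⟨(n - x.toList.length) % y.toList.length,
    Nat.mod_lt _ (by simp [NStr.toList])⟩

section Sequences

variable {α : Type*}

/-- The factor of the sequence `σ` read at the positions `a, …, a + k`, used to cut a sequence into
the two words of a match. Its length is `k + 1`, so that it is nonempty for every `k`. -/
def segment (σ : ℕ → α) (a k : ℕ) : NStr α :=
  (σ a, (List.range' (a + 1) k).map σ)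

theorem toList_segment (σ : ℕ → α) (a k : ℕ) :
    (segment σ a k).toList = (List.range' a (k + 1)).map σ := rfl

theorem length_toList_pos (x : NStr α) : 0 < x.toList.length := Nat.succ_pos _

theorem upSeq_of_lt {x y : NStr α} {n : ℕ} (h : n < x.toList.length) :
    upSeq x y n = x.toList[n] := dif_pos h

theorem upSeq_length_add (x y : NStr α) (n : ℕ) :
    upSeq x y (x.toList.length + n) =
      y.toList[n % y.toList.length]'(Nat.mod_lt _ (length_toList_pos y)) := by
  simp [upSeq]

theorem periodic_upSeq (x y : NStr α) :
    Function.Periodic (fun n ↦ upSeq x y (x.toList.length + n)) y.toList.length := fun n ↦ by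
  simp only [upSeq_length_add, Nat.add_mod_right]

theorem periodic_tail_of_le_of_dvd {σ : ℕ → α} {M N p q : ℕ}
    (h : Function.Periodic (fun n ↦ σ (M + n)) p) (hMN : M ≤ N) (hpq : p ∣ q) :
    Function.Periodic (fun n ↦ σ (N + n)) q := by
  obtain ⟨d, rfl⟩ := Nat.exists_eq_add_of_le hMN
  obtain ⟨c, rfl⟩ := hpq
  intro n
  simpa only [smul_eq_mul, Nat.mul_comm c, Nat.add_assoc] using h.nsmul c (d + n)

theorem upSeq_segment {σ : ℕ → α} {a k : ℕ}
    (h : Function.Periodic (fun n ↦ σ (a + 1 + n)) (k + 1)) :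
    upSeq (segment σ 0 a) (segment σ (a + 1) k) = σ := by
  have length_segment : (segment σ 0 a).toList.length = a + 1 := by simp [toList_segment]
  funext n
  rcases lt_or_ge n (a + 1) with hn | hn
  · rw [upSeq_of_lt (length_segment.symm ▸ hn)]
    simp [toList_segment]
  · obtain ⟨m, rfl⟩ := Nat.exists_eq_add_of_le hn
    calc upSeq (segment σ 0 a) (segment σ (a + 1) k) (a + 1 + m)
        = σ (a + 1 + m % (k + 1)) := by
          rw [← length_segment, upSeq_length_add]
          simp [toList_segment]
      _ = σ (a + 1 + m) := h.map_mod_nat m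

end Sequences

theorem exists_lt_map_eq_and_modEq {ι : Type*} [Finite ι] (f : ℕ → ι) {S : Set ℕ}
    (hS : S.Infinite) {p : ℕ} (hp : 0 < p) :
    ∃ i ∈ S, ∃ j ∈ S, i < j ∧ f i = f j ∧ i ≡ j [MOD p] := by
  have : NeZero p := ⟨hp.ne'⟩
  obtain ⟨i, hi, j, hj, hij, heq⟩ := hS.exists_lt_map_eq_of_mapsTo
    (f := fun n ↦ (f n, (n : ZMod p))) (Set.mapsTo_univ _ _) Set.finite_univ
  obtain ⟨hf, hmod⟩ := Prod.ext_iff.1 heq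
  exact ⟨i, hi, j, hj, hij, hf, (ZMod.natCast_eq_natCast_iff i j p).1 hmod⟩

section Runs

variable {α : Type*} {M : BA α} {σ : ℕ → α} {ρ : ℕ → M.Q}

theorem stepsL_map_range' (hρ : ∀ n, M.trans (ρ n) (σ n) (ρ (n + 1))) (a k : ℕ) :
    M.StepsL (ρ a) ((List.range' a k).map σ) (ρ (a + k)) := by
  induction k generalizing a with
  | zero => rfl
  | succ k ih => exact ⟨ρ (a + 1), hρ a, Nat.add_right_comm a 1 k ▸ ih (a + 1)⟩

theorem steps_segment (hρ : ∀ n, M.trans (ρ n) (σ n) (ρ (n + 1))) (a k : ℕ) :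
    M.Steps (ρ a) (segment σ a k) (ρ (a + (k + 1))) :=
  stepsL_map_range' hρ a (k + 1)

theorem BA.Steps.stepsAcc {p q : M.Q} {x : NStr α} (h : M.Steps p x q) (hp : M.accept p) :
    M.StepsAcc p x q :=
  let ⟨r, hpr, hrq⟩ := h
  ⟨r, hpr, Or.inl ⟨hp, hrq⟩⟩

theorem isMatch_segment (hinit : M.init (ρ 0)) (hρ : ∀ n, M.trans (ρ n) (σ n) (ρ (n + 1)))
    {a k : ℕ} (hacc : M.accept (ρ (a + 1))) (hloop : ρ (a + 1) = ρ (a + 1 + (k + 1))) :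
    M.IsMatch (segment σ 0 a) (segment σ (a + 1) k) := by
  have reach : M.Steps (ρ 0) (segment σ 0 a) (ρ (a + 1)) := by
    simpa only [Nat.zero_add] using steps_segment hρ 0 a
  have loop : M.Steps (ρ (a + 1)) (segment σ (a + 1) k) (ρ (a + 1)) := by
    simpa only [← hloop] using steps_segment hρ (a + 1) k
  exact ⟨ρ 0, ρ (a + 1), hinit, reach, loop.stepsAcc hacc⟩

end Runs

theorem match_for_up_general {α : Type*} (A : BA α) {σ : ℕ → α} {N p : ℕ} (hp : 0 < p)
    (hσ : Function.Periodic (fun n ↦ σ (N + n)) p) (h : A.Accepts σ) :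
    ∃ u v : NStr α, A.IsMatch u v ∧ upSeq u v = σ := by
  obtain ⟨ρ, hinit, hρ, hacc⟩ := h
  have := A.fin
  have accept_infinite : {n | A.accept (ρ n)}.Infinite :=
    Nat.frequently_atTop_iff_infinite.1 (Filter.frequently_atTop.2 hacc)
  -- Discarding positions up to `N` rather than below it makes the first word nonempty.
  obtain ⟨i, ⟨hacc_i, hi⟩, j, -, hij, hloop, hmod⟩ :=
    exists_lt_map_eq_and_modEq ρ (accept_infinite.sdiff (Set.finite_Iic N)) hp
  obtain ⟨a, rfl⟩ := Nat.exists_eq_succ_of_ne_zero (Nat.ne_zero_of_lt (not_le.1 hi))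
  obtain ⟨k, rfl⟩ := Nat.exists_eq_add_of_lt hij
  have period_dvd : p ∣ k + 1 := by
    rwa [Nat.modEq_iff_dvd' hij.le, Nat.add_assoc, Nat.add_sub_cancel_left] at hmod
  exact ⟨segment σ 0 a, segment σ (a + 1) k, isMatch_segment hinit hρ hacc_i hloop,
    upSeq_segment (periodic_tail_of_le_of_dvd hσ (not_le.1 hi).le period_dvd)⟩

/-- If a Büchi automaton accepts `x·y^ω`, then it has a match `(u, v)` with
`u·v^ω` pointwise equal to `x·y^ω`. -/
theorem match_for_up {α : Type*} [Fintype α] (A : BA α) (x y : NStr α)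
    (h : A.Accepts (upSeq x y)) :
    ∃ u v : NStr α, A.IsMatch u v ∧ ∀ n, upSeq u v n = upSeq x y n := by
  simpa only [funext_iff] using
    match_for_up_general A (length_toList_pos y) (periodic_upSeq x y) h

end Buechi
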